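/- (Main theorem, high-noise most-informative-function conjecture.) There exists an absolute constant δ > 0 such that for every n, every ε ∈ [0,1/2] with (1−2ε)² ≤ δ, and every boolean function f : {0,1}ⁿ → {0,1}, one has I(f(X);Y) ≤ 1 − H(ε), where X is uniform on {0,1}ⁿ and Y is obtained from X by flipping each coordinate independently with probability ε. -/

import Mathlib

open Finset

noncomputable def expec (n : ℕ) (f : (Fin n → Bool) → ℝ) : ℝ :=
  (∑ x : Fin n → Bool, f x) / 2 ^ n

noncomputable def walsh (n : ℕ) (S : Finset (Fin n)) (x : Fin n → Bool) : ℝ :=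
  ∏ i ∈ S, (if x i then (-1 : ℝ) else 1)

noncomputable def fcoef (n : ℕ) (f : (Fin n → Bool) → ℝ) (S : Finset (Fin n)) : ℝ :=
  expec n (fun x => f x * walsh n S x)

def comp (n : ℕ) (x : Fin n → Bool) : Fin n → Bool := fun i => !(x i)

noncomputable def evenPart (n : ℕ) (f : (Fin n → Bool) → ℝ) (x : Fin n → Bool) : ℝ :=
  (f x + f (comp n x)) / 2

noncomputable def oddPart (n : ℕ) (f : (Fin n → Bool) → ℝ) (x : Fin n → Bool) : ℝ :=
  f x - evenPart n f x

noncomputable def noiseK (n : ℕ) (ε : ℝ) (x y : Fin n → Bool) : ℝ :=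
  ∏ i : Fin n, (if x i = y i then 1 - ε else ε)

noncomputable def noiseOp (n : ℕ) (ε : ℝ) (f : (Fin n → Bool) → ℝ) (x : Fin n → Bool) : ℝ :=
  ∑ y : Fin n → Bool, noiseK n ε x y * f y

noncomputable def entro (n : ℕ) (g : (Fin n → Bool) → ℝ) : ℝ :=
  expec n (fun x => g x * Real.logb 2 (g x)) - expec n g * Real.logb 2 (expec n g)

noncomputable def varia (n : ℕ) (g : (Fin n → Bool) → ℝ) : ℝ :=
  expec n (fun x => g x ^ 2) - (expec n g) ^ 2

noncomputable def jointP (n : ℕ) (ε : ℝ) (f : (Fin n → Bool) → ℝ) (b : Bool)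
    (y : Fin n → Bool) : ℝ :=
  (∑ x : Fin n → Bool, if f x = (if b then (1 : ℝ) else 0) then noiseK n ε x y else 0) / 2 ^ n

noncomputable def margB (n : ℕ) (f : (Fin n → Bool) → ℝ) (b : Bool) : ℝ :=
  (∑ x : Fin n → Bool, if f x = (if b then (1 : ℝ) else 0) then (1 : ℝ) else 0) / 2 ^ n

noncomputable def margY (n : ℕ) (ε : ℝ) (f : (Fin n → Bool) → ℝ) (y : Fin n → Bool) : ℝ :=
  ∑ b : Bool, jointP n ε f b y

/-- Mutual information (in bits) between the bit `f(X)` and the noisy copy `Y`,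
where `X` is uniform on the hypercube and `Y` is obtained by flipping each
coordinate of `X` independently with probability `ε`. Terms with zero joint
probability contribute `0` (since `Real.logb 2 0 = 0`). -/
noncomputable def mutInfo (n : ℕ) (ε : ℝ) (f : (Fin n → Bool) → ℝ) : ℝ :=
  ∑ y : Fin n → Bool, ∑ b : Bool,
    jointP n ε f b y * Real.logb 2 (jointP n ε f b y / (margB n f b * margY n ε f y))

noncomputable def binEnt (x : ℝ) : ℝ := -x * Real.logb 2 x - (1 - x) * Real.logb 2 (1 - x)

section Cube

variable {n : ℕ}

lemma sum_cube_succ (g : (Fin (n + 1) → Bool) → ℝ) :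
    ∑ x, g x = ∑ y : Fin n → Bool,
      (g (Fin.cons false y : Fin (n + 1) → Bool) + g (Fin.cons true y : Fin (n + 1) → Bool)) := by
  rw [← (Fin.consEquiv (fun _ : Fin (n + 1) => Bool)).sum_comp, Fintype.sum_prod_type_right]
  refine Finset.sum_congr rfl fun y _ => ?_
  rw [Fintype.sum_bool, add_comm]
  rfl

lemma expec_succ (g : (Fin (n + 1) → Bool) → ℝ) :
    expec (n + 1) g = expec n (fun y =>
      (g (Fin.cons false y : Fin (n + 1) → Bool) + g (Fin.cons true y : Fin (n + 1) → Bool)) / 2) := by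
  unfold expec
  rw [sum_cube_succ, ← Finset.sum_div, div_div, pow_succ']

lemma expec_zero (g : (Fin 0 → Bool) → ℝ) : expec 0 g = g default := by
  simp [expec, -Pi.default_def]
  exact congrArg g (Subsingleton.elim _ _)

lemma expec_add (g h : (Fin n → Bool) → ℝ) :
    expec n (fun x => g x + h x) = expec n g + expec n h := by
  simp only [expec, Finset.sum_add_distrib, add_div]

lemma expec_sub (g h : (Fin n → Bool) → ℝ) :
    expec n (fun x => g x - h x) = expec n g - expec n h := by
  simp only [expec, Finset.sum_sub_distrib, sub_div]

lemma expec_mul_left (c : ℝ) (g : (Fin n → Bool) → ℝ) :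
    expec n (fun x => c * g x) = c * expec n g := by
  simp only [expec, ← Finset.mul_sum, mul_div_assoc]

lemma expec_div (g : (Fin n → Bool) → ℝ) (c : ℝ) :
    expec n (fun x => g x / c) = expec n g / c := by
  simp only [div_eq_inv_mul, expec_mul_left]

lemma expec_const (c : ℝ) : expec n (fun _ => c) = c := by
  simp [expec]

lemma expec_mono {g h : (Fin n → Bool) → ℝ} (H : ∀ x, g x ≤ h x) : expec n g ≤ expec n h :=
  div_le_div_of_nonneg_right (Finset.sum_le_sum fun x _ => H x) (by positivity)

lemma expec_nonneg {g : (Fin n → Bool) → ℝ} (H : ∀ x, 0 ≤ g x) : 0 ≤ expec n g :=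
  div_nonneg (Finset.sum_nonneg fun x _ => H x) (by positivity)

lemma expec_sum {ι : Type*} (s : Finset ι) (g : ι → (Fin n → Bool) → ℝ) :
    expec n (fun x => ∑ i ∈ s, g i x) = ∑ i ∈ s, expec n (g i) := by
  simp only [expec]
  rw [Finset.sum_comm, Finset.sum_div]

lemma expec_mul_sq_le (g h : (Fin n → Bool) → ℝ) :
    expec n (fun x => g x * h x) ^ 2 ≤ expec n (fun x => g x ^ 2) * expec n (fun x => h x ^ 2) := by
  simp only [expec, div_pow, div_mul_div_comm, ← sq]
  exact div_le_div_of_nonneg_right (Finset.sum_mul_sq_le_sq_mul_sq _ g h) (by positivity)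

lemma sq_expec_le (g : (Fin n → Bool) → ℝ) : expec n g ^ 2 ≤ expec n (fun x => g x ^ 2) := by
  simpa [expec_const] using expec_mul_sq_le g (fun _ => 1)

/-- The even part of `g` in the first coordinate. -/
noncomputable def headEven (g : (Fin (n + 1) → Bool) → ℝ) (y : Fin n → Bool) : ℝ :=
  (g (Fin.cons false y : Fin (n + 1) → Bool) + g (Fin.cons true y : Fin (n + 1) → Bool)) / 2

/-- The odd part of `g` in the first coordinate. -/
noncomputable def headOdd (g : (Fin (n + 1) → Bool) → ℝ) (y : Fin n → Bool) : ℝ :=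
  (g (Fin.cons false y : Fin (n + 1) → Bool) - g (Fin.cons true y : Fin (n + 1) → Bool)) / 2

/-- The sign `(-1) ^ b` of a bit. -/
noncomputable def sgn (b : Bool) : ℝ := if b then -1 else 1

lemma sgn_false : sgn false = 1 := rfl

lemma sgn_true : sgn true = -1 := rfl

lemma sgn_sq (b : Bool) : sgn b ^ 2 = 1 := by cases b <;> norm_num [sgn]

lemma noiseK_comm (ε : ℝ) (x y : Fin n → Bool) : noiseK n ε x y = noiseK n ε y x := by
  simp only [noiseK, eq_comm]

lemma noiseK_nonneg {ε : ℝ} (h0 : 0 ≤ ε) (h1 : ε ≤ 1) (x y : Fin n → Bool) :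
    0 ≤ noiseK n ε x y :=
  Finset.prod_nonneg fun i _ => by split_ifs <;> linarith

lemma noiseK_cons (ε : ℝ) (a b : Bool) (x y : Fin n → Bool) :
    noiseK (n + 1) ε (Fin.cons a x) (Fin.cons b y) =
      (if a = b then 1 - ε else ε) * noiseK n ε x y := by
  simp [noiseK, Fin.prod_univ_succ]

lemma noiseOp_cons (ε : ℝ) (g : (Fin (n + 1) → Bool) → ℝ) (b : Bool) (y : Fin n → Bool) :
    noiseOp (n + 1) ε g (Fin.cons b y) =
      noiseOp n ε (headEven g) y + sgn b * (1 - 2 * ε) * noiseOp n ε (headOdd g) y := by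
  simp only [noiseOp, sum_cube_succ, noiseK_cons, Finset.mul_sum, ← Finset.sum_add_distrib]
  refine Finset.sum_congr rfl fun z _ => ?_
  cases b <;> simp [headEven, headOdd, sgn] <;> ring

lemma noiseOp_zero (ε : ℝ) (g : (Fin 0 → Bool) → ℝ) (x : Fin 0 → Bool) :
    noiseOp 0 ε g x = g default := by
  simp [noiseOp, noiseK, -Pi.default_def]
  exact congrArg g (Subsingleton.elim _ _)

lemma noiseOp_sub (ε : ℝ) (g h : (Fin n → Bool) → ℝ) (x : Fin n → Bool) :
    noiseOp n ε (fun y => g y - h y) x = noiseOp n ε g x - noiseOp n ε h x := by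
  simp only [noiseOp, mul_sub, Finset.sum_sub_distrib]

lemma noiseOp_mul_left (ε c : ℝ) (g : (Fin n → Bool) → ℝ) (x : Fin n → Bool) :
    noiseOp n ε (fun y => c * g y) x = c * noiseOp n ε g x := by
  simp only [noiseOp, Finset.mul_sum]
  exact Finset.sum_congr rfl fun y _ => by ring

lemma sum_noiseK (ε : ℝ) (x : Fin n → Bool) : ∑ y, noiseK n ε x y = 1 := by
  induction n with
  | zero => simp [noiseK]
  | succ n ih =>
    obtain ⟨b, x, rfl⟩ : ∃ b z, x = Fin.cons b z := ⟨x 0, Fin.tail x, (Fin.cons_self_tail x).symm⟩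
    simp only [sum_cube_succ, noiseK_cons, ← add_mul, ← Finset.mul_sum, ih]
    cases b <;> simp

lemma noiseOp_const (ε c : ℝ) (x : Fin n → Bool) : noiseOp n ε (fun _ => c) x = c := by
  simp only [noiseOp, ← Finset.sum_mul, sum_noiseK, one_mul]

lemma noiseOp_mono {ε : ℝ} (h0 : 0 ≤ ε) (h1 : ε ≤ 1) {g h : (Fin n → Bool) → ℝ}
    (H : ∀ x, g x ≤ h x) (x : Fin n → Bool) : noiseOp n ε g x ≤ noiseOp n ε h x :=
  Finset.sum_le_sum fun y _ => mul_le_mul_of_nonneg_left (H y) (noiseK_nonneg h0 h1 x y)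

lemma expec_noiseOp (ε : ℝ) (g : (Fin n → Bool) → ℝ) :
    expec n (noiseOp n ε g) = expec n g := by
  simp only [expec, noiseOp]
  rw [Finset.sum_comm]
  simp only [← Finset.sum_mul, noiseK_comm ε _, sum_noiseK, one_mul]

lemma expec_headEven (g : (Fin (n + 1) → Bool) → ℝ) : expec n (headEven g) = expec (n + 1) g :=
  (expec_succ g).symm

lemma expec_sq_succ (g : (Fin (n + 1) → Bool) → ℝ) :
    expec (n + 1) (fun x => g x ^ 2) =
      expec n (fun y => headEven g y ^ 2) + expec n (fun y => headOdd g y ^ 2) := by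
  rw [expec_succ, ← expec_add]
  congr 1; funext y; simp only [headEven, headOdd]; ring

lemma expec_noiseOp_sq_succ (ε : ℝ) (g : (Fin (n + 1) → Bool) → ℝ) :
    expec (n + 1) (fun x => noiseOp (n + 1) ε g x ^ 2) =
      expec n (fun y => noiseOp n ε (headEven g) y ^ 2) +
        (1 - 2 * ε) ^ 2 * expec n (fun y => noiseOp n ε (headOdd g) y ^ 2) := by
  rw [expec_succ, ← expec_mul_left, ← expec_add]
  congr 1; funext y; simp only [noiseOp_cons, sgn_false, sgn_true]; ring

lemma expec_noiseOp_sq_le {ε : ℝ} (hε : (1 - 2 * ε) ^ 2 ≤ 1) (g : (Fin n → Bool) → ℝ) :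
    expec n (fun x => noiseOp n ε g x ^ 2) ≤
      expec n g ^ 2 + (1 - 2 * ε) ^ 2 * (expec n (fun x => g x ^ 2) - expec n g ^ 2) := by
  induction n with
  | zero => simp [expec_zero, noiseOp_zero]
  | succ n ih =>
    rw [expec_noiseOp_sq_succ, expec_sq_succ, ← expec_headEven]
    have h0 := ih (headEven g)
    have h1 := ih (headOdd g)
    have h2 := sq_expec_le (headOdd g)
    have h3 : expec n (fun y => noiseOp n ε (headOdd g) y ^ 2) ≤
        expec n (fun y => headOdd g y ^ 2) := by nlinarith
    nlinarith [sq_nonneg (1 - 2 * ε)]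

/-- The Fourier weight of `g` on singletons. -/
noncomputable def levelOne (n : ℕ) (g : (Fin n → Bool) → ℝ) : ℝ :=
  ∑ i, expec n (fun x => g x * sgn (x i)) ^ 2

lemma levelOne_nonneg (g : (Fin n → Bool) → ℝ) : 0 ≤ levelOne n g :=
  Finset.sum_nonneg fun _ _ => sq_nonneg _

lemma expec_mul_sgn_zero (g : (Fin (n + 1) → Bool) → ℝ) :
    expec (n + 1) (fun x => g x * sgn (x 0)) = expec n (headOdd g) := by
  rw [expec_succ]
  congr 1; funext y; simp only [headOdd, Fin.cons_zero, sgn_false, sgn_true]; ring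

lemma expec_mul_sgn_succ (g : (Fin (n + 1) → Bool) → ℝ) (i : Fin n) :
    expec (n + 1) (fun x => g x * sgn (x i.succ)) =
      expec n (fun y => headEven g y * sgn (y i)) := by
  rw [expec_succ]
  congr 1; funext y; simp only [headEven, Fin.cons_succ]; ring

lemma levelOne_succ (g : (Fin (n + 1) → Bool) → ℝ) :
    levelOne (n + 1) g = expec n (headOdd g) ^ 2 + levelOne n (headEven g) := by
  simp only [levelOne, Fin.sum_univ_succ, expec_mul_sgn_zero, expec_mul_sgn_succ]

lemma expec_noiseOp_sq_le_levelOne {ε : ℝ} (hε : (1 - 2 * ε) ^ 2 ≤ 1) (g : (Fin n → Bool) → ℝ) :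
    expec n (fun x => noiseOp n ε g x ^ 2) ≤
      expec n g ^ 2 + (1 - 2 * ε) ^ 2 * levelOne n g +
        (1 - 2 * ε) ^ 4 * (expec n (fun x => g x ^ 2) - expec n g ^ 2 - levelOne n g) := by
  induction n with
  | zero => simp [expec_zero, noiseOp_zero, levelOne]
  | succ n ih =>
    rw [expec_noiseOp_sq_succ, expec_sq_succ, ← expec_headEven, levelOne_succ]
    have h0 := ih (headEven g)
    have h1 := mul_le_mul_of_nonneg_left (expec_noiseOp_sq_le hε (headOdd g))
      (sq_nonneg (1 - 2 * ε))
    linear_combination h0 + h1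

lemma noiseOp_sgn (ε : ℝ) (i : Fin n) (x : Fin n → Bool) :
    noiseOp n ε (fun y => sgn (y i)) x = (1 - 2 * ε) * sgn (x i) := by
  induction n with
  | zero => exact i.elim0
  | succ n ih =>
    obtain ⟨b, x, rfl⟩ : ∃ b z, x = Fin.cons b z := ⟨x 0, Fin.tail x, (Fin.cons_self_tail x).symm⟩
    rw [noiseOp_cons]
    refine Fin.cases ?_ (fun j => ?_) i
    · have h0 : headEven (fun y : Fin (n + 1) → Bool => sgn (y 0)) = fun _ => 0 := by
        funext y; simp [headEven, sgn]
      have h1 : headOdd (fun y : Fin (n + 1) → Bool => sgn (y 0)) = fun _ => 1 := by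
        funext y; simp [headOdd, sgn]
      rw [h0, h1, noiseOp_const, noiseOp_const, Fin.cons_zero]; ring
    · have h0 : headEven (fun y : Fin (n + 1) → Bool => sgn (y j.succ)) = fun y => sgn (y j) := by
        funext y; simp [headEven]
      have h1 : headOdd (fun y : Fin (n + 1) → Bool => sgn (y j.succ)) = fun _ => 0 := by
        funext y; simp [headOdd]
      rw [h0, h1, noiseOp_const, ih, Fin.cons_succ]; ring

lemma expec_noiseOp_mul (ε : ℝ) (g h : (Fin n → Bool) → ℝ) :
    expec n (fun x => noiseOp n ε g x * h x) = expec n (fun x => g x * noiseOp n ε h x) := by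
  simp only [expec, noiseOp, Finset.sum_mul, Finset.mul_sum]
  rw [Finset.sum_comm]
  congr 1
  refine Finset.sum_congr rfl fun y _ => Finset.sum_congr rfl fun x _ => ?_
  rw [noiseK_comm]; ring

lemma expec_noiseOp_pow_four_le {ε ε' : ℝ} (h : (1 - 2 * ε') ^ 2 = 3 * (1 - 2 * ε) ^ 2)
    (g : (Fin n → Bool) → ℝ) :
    expec n (fun x => noiseOp n ε g x ^ 4) ≤ expec n (fun x => noiseOp n ε' g x ^ 2) ^ 2 := by
  induction n with
  | zero => simp only [expec_zero, noiseOp_zero]; apply le_of_eq; ring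
  | succ n ih =>
    rw [expec_noiseOp_sq_succ, h]
    set A := noiseOp n ε (headEven g)
    set B := noiseOp n ε (headOdd g)
    set P := expec n (fun y => noiseOp n ε' (headEven g) y ^ 2)
    set Q := expec n (fun y => noiseOp n ε' (headOdd g) y ^ 2)
    have hP : 0 ≤ P := expec_nonneg fun _ => sq_nonneg _
    have hQ : 0 ≤ Q := expec_nonneg fun _ => sq_nonneg _
    have hA : expec n (fun y => A y ^ 4) ≤ P ^ 2 := ih _
    have hB : expec n (fun y => B y ^ 4) ≤ Q ^ 2 := ih _
    have hB0 : 0 ≤ expec n (fun y => B y ^ 4) := expec_nonneg fun _ => by positivity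
    have hAB : expec n (fun y => A y ^ 2 * B y ^ 2) ≤ P * Q := by
      have := expec_mul_sq_le (fun y => A y ^ 2) (fun y => B y ^ 2)
      simp only [← pow_mul, Nat.reduceMul] at this
      refine abs_le_of_sq_le_sq' (this.trans ?_) (mul_nonneg hP hQ) |>.2
      rw [mul_pow]
      exact mul_le_mul hA hB hB0 (by positivity)
    have key : expec (n + 1) (fun x => noiseOp (n + 1) ε g x ^ 4) =
        expec n (fun y => A y ^ 4) + 6 * (1 - 2 * ε) ^ 2 * expec n (fun y => A y ^ 2 * B y ^ 2) +
          (1 - 2 * ε) ^ 4 * expec n (fun y => B y ^ 4) := by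
      rw [expec_succ, ← expec_mul_left, ← expec_mul_left, ← expec_add, ← expec_add]
      congr 1; funext y; simp only [noiseOp_cons, sgn_false, sgn_true, A, B]; ring
    rw [key]
    have e1 := mul_le_mul_of_nonneg_left hAB (show 0 ≤ 6 * (1 - 2 * ε) ^ 2 by positivity)
    have e2 := mul_le_mul_of_nonneg_left hB (show 0 ≤ (1 - 2 * ε) ^ 4 by positivity)
    have e3 : 0 ≤ (1 - 2 * ε) ^ 4 * Q ^ 2 := by positivity
    linear_combination hA + e1 + e2 + 8 * e3

/-- The linear form `∑ i, b i * (-1) ^ x i`. -/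
noncomputable def linForm (b : Fin n → ℝ) (x : Fin n → Bool) : ℝ := ∑ i, b i * sgn (x i)

lemma linForm_cons (b : Fin (n + 1) → ℝ) (c : Bool) (y : Fin n → Bool) :
    linForm b (Fin.cons c y : Fin (n + 1) → Bool) = b 0 * sgn c + linForm (Fin.tail b) y := by
  simp [linForm, Fin.sum_univ_succ, Fin.tail]

lemma expec_linForm_sq (a : ℝ) (b : Fin n → ℝ) :
    expec n (fun x => (a + linForm b x) ^ 2) = a ^ 2 + ∑ i, b i ^ 2 := by
  induction n generalizing a with
  | zero => simp [expec_zero, linForm]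
  | succ n ih =>
    rw [expec_succ]
    simp only [linForm_cons, sgn_false, sgn_true, ← add_assoc]
    rw [expec_div, expec_add, ih, ih, Fin.sum_univ_succ]
    simp only [Fin.tail]; ring

lemma expec_linForm_pow_four (a : ℝ) (b : Fin n → ℝ) :
    expec n (fun x => (a + linForm b x) ^ 4) =
      a ^ 4 + 6 * a ^ 2 * ∑ i, b i ^ 2 + 3 * (∑ i, b i ^ 2) ^ 2 - 2 * ∑ i, b i ^ 4 := by
  induction n generalizing a with
  | zero => simp [expec_zero, linForm]
  | succ n ih =>
    rw [expec_succ]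
    simp only [linForm_cons, sgn_false, sgn_true, ← add_assoc]
    rw [expec_div, expec_add, ih, ih, Fin.sum_univ_succ, Fin.sum_univ_succ]
    simp only [Fin.tail]; ring

lemma expec_linForm_pow_six_le (a : ℝ) (b : Fin n → ℝ) :
    expec n (fun x => (a + linForm b x) ^ 6) ≤
      a ^ 6 + 15 * a ^ 4 * ∑ i, b i ^ 2 + 45 * a ^ 2 * (∑ i, b i ^ 2) ^ 2 +
        15 * (∑ i, b i ^ 2) ^ 3 := by
  induction n generalizing a with
  | zero => simp [expec_zero, linForm]
  | succ n ih =>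
    rw [expec_succ]
    simp only [linForm_cons, sgn_false, sgn_true, ← add_assoc]
    rw [expec_div, expec_add, Fin.sum_univ_succ]
    have h1 := ih (a + b 0 * 1) (Fin.tail b)
    have h2 := ih (a + b 0 * -1) (Fin.tail b)
    have e : ∑ i, Fin.tail b i ^ 2 = ∑ i : Fin n, b i.succ ^ 2 := rfl
    rw [e] at h1 h2
    have hW : 0 ≤ ∑ i : Fin n, b i.succ ^ 2 := Finset.sum_nonneg fun _ _ => sq_nonneg _
    set W := ∑ i : Fin n, b i.succ ^ 2
    have p1 : 0 ≤ a ^ 2 * b 0 ^ 4 := by positivity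
    have p2 : 0 ≤ W * b 0 ^ 4 := by positivity
    have p3 : 0 ≤ b 0 ^ 6 := by positivity
    linear_combination (h1 + h2) / 2 + 30 * p1 + 30 * p2 + 14 * p3

lemma expec_mul_linForm (g : (Fin n → Bool) → ℝ) (b : Fin n → ℝ) :
    expec n (fun x => g x * linForm b x) = ∑ i, b i * expec n (fun x => g x * sgn (x i)) := by
  simp only [linForm, Finset.mul_sum, ← expec_mul_left]
  rw [expec_sum]
  exact Finset.sum_congr rfl fun i _ => by congr 1; funext x; ring

/-- A level-one inequality for functions with values in `{-1, 0, 1}`. -/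
lemma levelOne_sq_le (g : (Fin n → Bool) → ℝ) (hg : ∀ x, g x ^ 3 = g x) :
    levelOne n g ^ 2 ≤ 3 * expec n (fun x => g x ^ 2) ^ 3 := by
  set b : Fin n → ℝ := fun i => expec n (fun x => g x * sgn (x i)) with hb
  set p := expec n (fun x => g x ^ 2) with hp
  have hW : levelOne n g = ∑ i, b i ^ 2 := rfl
  have hp0 : 0 ≤ p := expec_nonneg fun _ => sq_nonneg _
  have h1 : expec n (fun x => g x * linForm b x) = levelOne n g := by
    rw [expec_mul_linForm, hW]; exact Finset.sum_congr rfl fun i _ => by ring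
  have h2 := expec_mul_sq_le g (fun x => g x ^ 2 * linForm b x)
  have h3 : (fun x => g x * (g x ^ 2 * linForm b x)) = fun x => g x * linForm b x := by
    funext x; linear_combination linForm b x * hg x
  rw [h3, h1] at h2
  have h4 := expec_mul_sq_le (fun x => g x ^ 2) (fun x => linForm b x ^ 2)
  have h5 : (fun x => (g x ^ 2 * linForm b x) ^ 2) = fun x => g x ^ 2 * linForm b x ^ 2 := by
    funext x; linear_combination g x * linForm b x ^ 2 * hg x
  have h6 : (fun x => (g x ^ 2) ^ 2) = fun x => g x ^ 2 := by
    funext x; linear_combination g x * hg x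
  have h7 : expec n (fun x => (linForm b x ^ 2) ^ 2) ≤ 3 * levelOne n g ^ 2 := by
    have := expec_linForm_pow_four 0 b
    simp only [zero_add, ← hW] at this
    simp only [← pow_mul, Nat.reduceMul, this]
    have : 0 ≤ ∑ i, b i ^ 4 := Finset.sum_nonneg fun _ _ => by positivity
    linarith
  rw [h5] at h2
  rw [h6] at h4
  set W := levelOne n g
  set R := expec n (fun x => g x ^ 2 * linForm b x ^ 2)
  have hR : R ^ 2 ≤ p * (3 * W ^ 2) := h4.trans (mul_le_mul_of_nonneg_left h7 hp0)
  by_cases hW0 : W = 0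
  · rw [hW0]; nlinarith [pow_nonneg hp0 3]
  have hW2 : 0 < W ^ 2 := by positivity
  have h8 : (W ^ 2) ^ 2 ≤ (p * R) ^ 2 := pow_le_pow_left₀ (sq_nonneg _) h2 2
  have h9 : W ^ 2 * W ^ 2 ≤ 3 * p ^ 3 * W ^ 2 := by
    calc W ^ 2 * W ^ 2 = (W ^ 2) ^ 2 := by ring
      _ ≤ p ^ 2 * R ^ 2 := by rw [← mul_pow]; exact h8
      _ ≤ p ^ 2 * (p * (3 * W ^ 2)) := mul_le_mul_of_nonneg_left hR (sq_nonneg _)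
      _ = _ := by ring
  exact le_of_mul_le_mul_right h9 hW2

end Cube

section RelativeEntropy

lemma log_one_add_le_cubic {v : ℝ} (hv : -1 < v) :
    Real.log (1 + v) ≤ v - v ^ 2 / 2 + v ^ 3 / 3 := by
  set h : ℝ → ℝ := fun v => v - v ^ 2 / 2 + v ^ 3 / 3 - Real.log (1 + v) with hh
  have hd : ∀ v : ℝ, -1 < v → HasDerivAt h (v ^ 3 / (1 + v)) v := by
    intro v hv
    have h1 : 1 + v ≠ 0 := by linarith
    have := ((((hasDerivAt_id v).sub (((hasDerivAt_id v).pow 2).div_const 2)).add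
      (((hasDerivAt_id v).pow 3).div_const 3))).sub (((hasDerivAt_id v).const_add 1).log h1)
    refine this.congr_deriv ?_
    simp only [id]; field_simp; ring
  have h0 : h 0 = 0 := by simp [hh]
  suffices 0 ≤ h v by simp only [hh] at this; linarith
  rcases le_total 0 v with h1 | h1
  · rw [← h0]
    refine monotoneOn_of_deriv_nonneg (convex_Ici 0)
      (fun x hx => (hd x (by linarith [Set.mem_Ici.1 hx])).continuousAt.continuousWithinAt)
      (fun x hx => ?_) (fun x hx => ?_) Set.self_mem_Ici h1 h1
    · rw [interior_Ici] at hx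
      exact (hd x (by linarith [Set.mem_Ioi.1 hx])).differentiableAt.differentiableWithinAt
    · rw [interior_Ici] at hx
      have hx : 0 < x := hx
      rw [(hd x (by linarith)).deriv]; positivity
  · rw [← h0]
    refine antitoneOn_of_deriv_nonpos (convex_Icc v 0)
      (fun x hx => (hd x (by linarith [hx.1])).continuousAt.continuousWithinAt)
      (fun x hx => ?_) (fun x hx => ?_) (Set.left_mem_Icc.2 h1) (Set.right_mem_Icc.2 h1) h1
    · rw [interior_Icc] at hx
      exact (hd x (by linarith [hx.1])).differentiableAt.differentiableWithinAt
    · rw [interior_Icc] at hx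
      rw [(hd x (by linarith [hx.1])).deriv]
      exact div_nonpos_of_nonpos_of_nonneg (by nlinarith [hx.2, sq_nonneg x]) (by linarith [hx.1])

lemma one_add_mul_log_le_quartic {v : ℝ} (hv : -1 ≤ v) :
    (1 + v) * Real.log (1 + v) ≤ v + v ^ 2 / 2 - v ^ 3 / 6 + v ^ 4 / 3 := by
  rcases hv.eq_or_lt with rfl | hv
  · norm_num
  · have := mul_le_mul_of_nonneg_left (log_one_add_le_cubic hv) (show 0 ≤ 1 + v by linarith)
    linarith

lemma one_add_mul_log_le_sq {v : ℝ} (hv : -1 ≤ v) :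
    (1 + v) * Real.log (1 + v) ≤ v + v ^ 2 := by
  rcases hv.eq_or_lt with rfl | hv
  · norm_num
  · have := mul_le_mul_of_nonneg_left (Real.log_le_sub_one_of_pos (show 0 < 1 + v by linarith))
      (show 0 ≤ 1 + v by linarith)
    linarith

/-- The relative entropy, in nats, between the laws of signs with means `t` and `a`. -/
noncomputable def signRelEnt (t a : ℝ) : ℝ :=
  ((1 + t) * Real.log ((1 + t) / (1 + a)) + (1 - t) * Real.log ((1 - t) / (1 - a))) / 2

lemma signRelEnt_neg (t a : ℝ) : signRelEnt (-t) (-a) = signRelEnt t a := by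
  simp only [signRelEnt, sub_neg_eq_add, ← sub_eq_add_neg]; ring

lemma signRelEnt_add_eq {t : ℝ} (ht : |t| < 1) (u : ℝ) :
    signRelEnt (t + u) t =
      ((1 + t) * ((1 + u / (1 + t)) * Real.log (1 + u / (1 + t))) +
        (1 - t) * ((1 + -u / (1 - t)) * Real.log (1 + -u / (1 - t)))) / 2 := by
  obtain ⟨h1, h2⟩ := abs_lt.1 ht
  have e1 : 1 + t ≠ 0 := by linarith
  have e2 : 1 - t ≠ 0 := by linarith
  have a1 : (1 + (t + u)) / (1 + t) = 1 + u / (1 + t) := by field_simp; ring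
  have a2 : (1 - (t + u)) / (1 - t) = 1 + -u / (1 - t) := by field_simp; ring
  rw [signRelEnt, a1, a2, ← mul_assoc, ← mul_assoc]
  congr 3 <;> field_simp <;> ring

lemma signRelEnt_le_quartic {t u : ℝ} (ht : |t| < 1) (h1 : -1 ≤ t + u) (h2 : t + u ≤ 1) :
    signRelEnt (t + u) t ≤ u ^ 2 / (2 * (1 - t ^ 2)) + t * u ^ 3 / (3 * (1 - t ^ 2) ^ 2) +
      u ^ 4 * (1 + 3 * t ^ 2) / (3 * (1 - t ^ 2) ^ 3) := by
  obtain ⟨ht1, ht2⟩ := abs_lt.1 ht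
  have e1 : 0 < 1 + t := by linarith
  have e2 : 0 < 1 - t := by linarith
  have v1 : -1 ≤ u / (1 + t) := by rw [le_div_iff₀ e1]; linarith
  have v2 : -1 ≤ -u / (1 - t) := by rw [le_div_iff₀ e2]; linarith
  have b1 := mul_le_mul_of_nonneg_left (one_add_mul_log_le_quartic v1) e1.le
  have b2 := mul_le_mul_of_nonneg_left (one_add_mul_log_le_quartic v2) e2.le
  rw [signRelEnt_add_eq ht]
  refine (div_le_div_of_nonneg_right (add_le_add b1 b2) zero_le_two).trans (le_of_eq ?_)
  have e3 : 1 - t ^ 2 = (1 + t) * (1 - t) := by ring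
  rw [e3]
  field_simp
  ring

lemma signRelEnt_le_sq {t u : ℝ} (ht : |t| < 1) (h1 : -1 ≤ t + u) (h2 : t + u ≤ 1) :
    signRelEnt (t + u) t ≤ u ^ 2 / (1 - t ^ 2) := by
  obtain ⟨ht1, ht2⟩ := abs_lt.1 ht
  have e1 : 0 < 1 + t := by linarith
  have e2 : 0 < 1 - t := by linarith
  have v1 : -1 ≤ u / (1 + t) := by rw [le_div_iff₀ e1]; linarith
  have v2 : -1 ≤ -u / (1 - t) := by rw [le_div_iff₀ e2]; linarith
  have b1 := mul_le_mul_of_nonneg_left (one_add_mul_log_le_sq v1) e1.le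
  have b2 := mul_le_mul_of_nonneg_left (one_add_mul_log_le_sq v2) e2.le
  rw [signRelEnt_add_eq ht]
  refine (div_le_div_of_nonneg_right (add_le_add b1 b2) zero_le_two).trans (le_of_eq ?_)
  have e3 : 1 - t ^ 2 = (1 + t) * (1 - t) := by ring
  rw [e3]
  field_simp
  ring

lemma sq_div_two_le_signRelEnt {r : ℝ} (h0 : 0 ≤ r) (h1 : r < 1) :
    r ^ 2 / 2 ≤ signRelEnt r 0 := by
  set h : ℝ → ℝ := fun v =>
    (1 + v) * Real.log (1 + v) + (1 - v) * Real.log (1 - v) - v ^ 2 with hh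
  have hd : ∀ v : ℝ, 0 ≤ v → v < 1 →
      HasDerivAt h (Real.log (1 + v) - Real.log (1 - v) - 2 * v) v := by
    intro v h0 h1
    have e1 : 1 + v ≠ 0 := by linarith
    have e2 : 1 - v ≠ 0 := by linarith
    have d1 := (hasDerivAt_id v).const_add 1
    have d2 := (hasDerivAt_id v).const_sub 1
    have := ((d1.mul (d1.log e1)).add (d2.mul (d2.log e2))).sub ((hasDerivAt_id v).pow 2)
    refine this.congr_deriv ?_
    simp only [id]; field_simp; ring
  have hm : MonotoneOn h (Set.Ico 0 1) := by
    refine monotoneOn_of_deriv_nonneg (convex_Ico 0 1)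
      (fun x hx => (hd x hx.1 hx.2).continuousAt.continuousWithinAt)
      (fun x hx => ?_) (fun x hx => ?_)
    · rw [interior_Ico] at hx
      exact (hd x hx.1.le hx.2).differentiableAt.differentiableWithinAt
    · rw [interior_Ico] at hx
      rw [(hd x hx.1.le hx.2).deriv]
      have s := Real.hasSum_log_sub_log_of_abs_lt_one (abs_lt.2 ⟨by linarith [hx.1], hx.2⟩)
      have := sum_le_hasSum {0} (fun k _ => by have := hx.1; positivity) s
      simp at this
      linarith
  have := hm ⟨le_rfl, zero_lt_one⟩ ⟨h0, h1⟩ h0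
  simp [hh] at this
  simp only [signRelEnt, add_zero, sub_zero, div_one]
  linarith

lemma mul_log_div_mul_le {x y z : ℝ} (hx : 0 < x) (hy : 0 < y) (hz : 0 < z) :
    z * Real.log (z / x) ≤ z * Real.log y + z * (z / (x * y) - 1) := by
  rw [← mul_add]
  refine mul_le_mul_of_nonneg_left ?_ hz.le
  have := Real.log_le_sub_one_of_pos (show 0 < z / (x * y) by positivity)
  rw [← div_div, Real.log_div (by positivity) hy.ne'] at this
  rw [← div_div]
  linarith

lemma signRelEnt_add_sub_le {m r : ℝ} (hmr : |m| + |r| < 1) :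
    (signRelEnt (m + r) m + signRelEnt (m - r) m) / 2 ≤
      signRelEnt r 0 + m ^ 2 * r ^ 2 / ((1 - m ^ 2) * (1 - r ^ 2)) := by
  have am := abs_le.1 (le_refl |m|)
  have ar := abs_le.1 (le_refl |r|)
  have nm := abs_nonneg m
  have nr := abs_nonneg r
  have m1 : 0 < 1 + m := by linarith
  have m2 : 0 < 1 - m := by linarith
  have r1 : 0 < 1 + r := by linarith
  have r2 : 0 < 1 - r := by linarith
  have b1 := mul_log_div_mul_le m1 r1 (show 0 < 1 + (m + r) by linarith)
  have b2 := mul_log_div_mul_le m2 r2 (show 0 < 1 - (m + r) by linarith)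
  have b3 := mul_log_div_mul_le m1 r2 (show 0 < 1 + (m - r) by linarith)
  have b4 := mul_log_div_mul_le m2 r1 (show 0 < 1 - (m - r) by linarith)
  have key : (1 + (m + r)) * ((1 + (m + r)) / ((1 + m) * (1 + r)) - 1) +
      (1 - (m + r)) * ((1 - (m + r)) / ((1 - m) * (1 - r)) - 1) +
      (1 + (m - r)) * ((1 + (m - r)) / ((1 + m) * (1 - r)) - 1) +
      (1 - (m - r)) * ((1 - (m - r)) / ((1 - m) * (1 + r)) - 1) =
      4 * (m ^ 2 * r ^ 2 / ((1 - m ^ 2) * (1 - r ^ 2))) := by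
    have e3 : 1 - m ^ 2 = (1 + m) * (1 - m) := by ring
    have e4 : 1 - r ^ 2 = (1 + r) * (1 - r) := by ring
    rw [e3, e4]
    field_simp
    ring
  simp only [signRelEnt, add_zero, sub_zero, div_one]
  linear_combination (b1 + b2 + b3 + b4 + key) / 4

/-- The derivative of `signRelEnt · m` at `t`. -/
noncomputable def signLogRatio (t m : ℝ) : ℝ :=
  (Real.log ((1 + t) / (1 + m)) - Real.log ((1 - t) / (1 - m))) / 2

lemma signRelEnt_add_chain {t m u : ℝ} (ht : |t| < 1) (hm : |m| < 1) :
    signRelEnt (t + u) m = signRelEnt (t + u) t + signRelEnt t m + u * signLogRatio t m := by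
  obtain ⟨ht1, ht2⟩ := abs_lt.1 ht
  obtain ⟨hm1, hm2⟩ := abs_lt.1 hm
  have t1 : 1 + t ≠ 0 := by linarith
  have t2 : 1 - t ≠ 0 := by linarith
  have m1 : 1 + m ≠ 0 := by linarith
  have m2 : 1 - m ≠ 0 := by linarith
  have key : ∀ z x y : ℝ, x ≠ 0 → y ≠ 0 →
      z * Real.log (z / y) = z * Real.log (z / x) + z * Real.log (x / y) := by
    intro z x y hx hy
    rcases eq_or_ne z 0 with rfl | hz
    · simp
    · rw [Real.log_div hz hy, Real.log_div hz hx, Real.log_div hx hy]; ring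
  simp only [signRelEnt, signLogRatio]
  rw [key (1 + (t + u)) (1 + t) (1 + m) t1 m1, key (1 - (t + u)) (1 - t) (1 - m) t2 m2]
  ring

lemma le_signLogRatio_sub {m r : ℝ} (hr : 0 ≤ r) (hmr : |m| + r < 1) :
    r / 2 ≤ (signLogRatio (m + r) m - signLogRatio (m - r) m) / 2 := by
  have am := abs_le.1 (le_refl |m|)
  have nm := abs_nonneg m
  have m1 : 0 < 1 + m := by linarith
  have m2 : 0 < 1 - m := by linarith
  have z1 : 0 < 1 + (m + r) := by linarith
  have z2 : 0 < 1 - (m + r) := by linarith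
  have z3 : 0 < 1 + (m - r) := by linarith
  have z4 : 0 < 1 - (m - r) := by linarith
  have hx : ∀ x y : ℝ, 0 < x → 0 < y → 1 - y / x ≤ Real.log x - Real.log y := by
    intro x y hx hy
    have := Real.log_le_sub_one_of_pos (div_pos hy hx)
    rw [Real.log_div hy.ne' hx.ne'] at this
    linarith
  have b1 := hx _ _ z1 z3
  have b2 := hx _ _ z4 z2
  have c1 : r ≤ 1 - (1 + (m - r)) / (1 + (m + r)) := by
    rw [le_sub_comm, div_le_iff₀ z1]; nlinarith
  have c2 : r ≤ 1 - (1 - (m + r)) / (1 - (m - r)) := by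
    rw [le_sub_comm, div_le_iff₀ z4]; nlinarith
  simp only [signLogRatio]
  rw [Real.log_div z1.ne' m1.ne', Real.log_div z2.ne' m2.ne', Real.log_div z3.ne' m1.ne',
    Real.log_div z4.ne' m2.ne']
  linarith

end RelativeEntropy

section SignFunctions

variable {n : ℕ}

lemma expec_neg (g : (Fin n → Bool) → ℝ) : expec n (fun x => -g x) = -expec n g := by
  simpa using expec_mul_left (-1) g

lemma noiseOp_neg (ε : ℝ) (g : (Fin n → Bool) → ℝ) (x : Fin n → Bool) :
    noiseOp n ε (fun y => -g y) x = -noiseOp n ε g x := by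
  simpa using noiseOp_mul_left ε (-1) g x

lemma levelOne_mul_left (c : ℝ) (g : (Fin n → Bool) → ℝ) :
    levelOne n (fun x => c * g x) = c ^ 2 * levelOne n g := by
  simp only [levelOne, mul_assoc, expec_mul_left, mul_pow, Finset.mul_sum]

lemma expec_sgn (i : Fin n) : expec n (fun x => sgn (x i)) = 0 := by
  have h := expec_linForm_sq 1 (fun j : Fin n => if j = i then 1 else 0)
  have e : ∀ x : Fin n → Bool, linForm (fun j : Fin n => if j = i then (1 : ℝ) else 0) x =
      sgn (x i) := fun x => by simp [linForm]
  have e2 : ∀ x : Fin n → Bool, (1 + sgn (x i)) ^ 2 = 2 + 2 * sgn (x i) := fun x => by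
    linear_combination sgn_sq (x i)
  simp only [e, e2, expec_add, expec_mul_left, expec_const] at h
  simp at h
  linarith

lemma expec_sub_sq (g : (Fin n → Bool) → ℝ) :
    expec n (fun x => (g x - expec n g) ^ 2) = expec n (fun x => g x ^ 2) - expec n g ^ 2 := by
  set a := expec n g with ha
  have e : (fun x => (g x - a) ^ 2) = fun x => (g x ^ 2 - 2 * a * g x) + a ^ 2 := by
    funext x; ring
  rw [e, expec_add, expec_sub, expec_mul_left, expec_const, ← ha]; ring

lemma expec_noiseOp_sub_sq_le {ε : ℝ} (hε : (1 - 2 * ε) ^ 2 ≤ 1) (g : (Fin n → Bool) → ℝ) :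
    expec n (fun x => (noiseOp n ε g x - expec n g) ^ 2) ≤
      (1 - 2 * ε) ^ 2 * levelOne n g +
        (1 - 2 * ε) ^ 4 * (expec n (fun x => g x ^ 2) - expec n g ^ 2 - levelOne n g) := by
  have h := expec_sub_sq (noiseOp n ε g)
  rw [expec_noiseOp] at h
  have h' := expec_noiseOp_sq_le_levelOne hε g
  linarith

lemma expec_noiseOp_sub_pow_four_le {ε : ℝ} (hε : 3 * (1 - 2 * ε) ^ 2 ≤ 1)
    (g : (Fin n → Bool) → ℝ) :
    expec n (fun x => (noiseOp n ε g x - expec n g) ^ 4) ≤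
      (3 * (1 - 2 * ε) ^ 2 * (expec n (fun x => g x ^ 2) - expec n g ^ 2)) ^ 2 := by
  obtain ⟨ε', h⟩ : ∃ ε', (1 - 2 * ε') ^ 2 = 3 * (1 - 2 * ε) ^ 2 := by
    refine ⟨(1 - √3 * (1 - 2 * ε)) / 2, ?_⟩
    have := Real.sq_sqrt (show (0 : ℝ) ≤ 3 by norm_num)
    linear_combination (1 - 2 * ε) ^ 2 * this
  have h4 := expec_noiseOp_pow_four_le h (fun x => g x - expec n g)
  have h2 := expec_noiseOp_sq_le (by rw [h]; exact hε) (fun x => g x - expec n g) (ε := ε')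
  rw [expec_sub, expec_const, expec_sub_sq, sub_self, h] at h2
  simp only [noiseOp_sub, noiseOp_const] at h4
  refine h4.trans (pow_le_pow_left₀ (expec_nonneg fun _ => sq_nonneg _) ?_ 2)
  simp only [noiseOp_sub, noiseOp_const] at h2
  linarith

variable {F : (Fin n → Bool) → ℝ}

lemma expec_sq_of_sign (hF : ∀ x, F x ^ 2 = 1) : expec n (fun x => F x ^ 2) = 1 := by
  simp only [hF, expec_const]

lemma noiseOp_mem_Icc {ε : ℝ} (h0 : 0 ≤ ε) (h1 : ε ≤ 1) (hF : ∀ x, F x ^ 2 = 1)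
    (x : Fin n → Bool) : -1 ≤ noiseOp n ε F x ∧ noiseOp n ε F x ≤ 1 := by
  have hb : ∀ x, -1 ≤ F x ∧ F x ≤ 1 := fun x => abs_le.1 (abs_le_one_iff_mul_self_le_one.2
    (by rw [← sq, hF]))
  have l := noiseOp_mono h0 h1 (fun x => (hb x).1) x
  have u := noiseOp_mono h0 h1 (fun x => (hb x).2) x
  rw [noiseOp_const] at l u
  exact ⟨l, u⟩

/-- The information, in nats, that the noisy input carries about the sign `F`. -/
noncomputable def signInfo (n : ℕ) (ε : ℝ) (F : (Fin n → Bool) → ℝ) : ℝ :=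
  expec n (fun y => signRelEnt (noiseOp n ε F y) (expec n F))

lemma signInfo_neg (ε : ℝ) (F : (Fin n → Bool) → ℝ) :
    signInfo n ε (fun x => -F x) = signInfo n ε F := by
  simp only [signInfo, noiseOp_neg, expec_neg, signRelEnt_neg]

lemma signInfo_le_of_biased_nonneg {ε : ℝ} (h0 : 0 ≤ ε) (h1 : ε ≤ 1)
    (hr : (1 - 2 * ε) ^ 2 ≤ 1 / 5) (hF : ∀ x, F x ^ 2 = 1)
    (ha : 1 - expec n F ^ 2 ≤ 1 / 20) (ha0 : 0 ≤ expec n F) :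
    signInfo n ε F ≤ (1 - 2 * ε) ^ 2 / 2 := by
  have hle : expec n F ^ 2 ≤ 1 := (sq_expec_le F).trans (expec_sq_of_sign hF).le
  unfold signInfo
  set a := expec n F with ha'
  have ha1 : a ≤ 1 := by nlinarith
  set g : (Fin n → Bool) → ℝ := fun x => 1 / 2 - 1 / 2 * F x with hg
  have hg2 : ∀ x, g x ^ 2 = g x := fun x => by
    simp only [hg]; linear_combination (1 / 4) * hF x
  have hg3 : ∀ x, g x ^ 3 = g x := fun x => by
    linear_combination (g x + 1) * hg2 x
  have hp : expec n (fun x => g x ^ 2) = (1 - a) / 2 := by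
    simp only [hg2]
    simp only [hg]
    rw [expec_sub, expec_const, expec_mul_left, ← ha']; ring
  have hW : levelOne n g = levelOne n F / 4 := by
    simp only [levelOne, Finset.sum_div]
    refine Finset.sum_congr rfl fun i _ => ?_
    have e : (fun x => g x * sgn (x i)) =
        fun x => 1 / 2 * sgn (x i) - 1 / 2 * (F x * sgn (x i)) := by
      funext x; simp only [hg]; ring
    rw [e, expec_sub, expec_mul_left, expec_mul_left, expec_sgn]; ring
  have hl := levelOne_sq_le g hg3
  rw [hp, hW] at hl
  have hu2 := expec_noiseOp_sub_sq_le (hr.trans (by norm_num)) F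
  rw [expec_sq_of_sign hF, ← ha'] at hu2
  set W := levelOne n F
  have hW0 : 0 ≤ W := levelOne_nonneg F
  set r := 1 - 2 * ε
  rcases ha1.eq_or_lt with h | h
  · have hF1 : ∀ y, noiseOp n ε F y = 1 := by
      have hW' : W = 0 := by
        rw [h] at hl; nlinarith
      have hz : expec n (fun x => (noiseOp n ε F x - a) ^ 2) = 0 := by
        refine le_antisymm (hu2.trans ?_) (expec_nonneg fun _ => sq_nonneg _)
        rw [hW', h]; norm_num
      intro y
      unfold expec at hz
      rw [div_eq_zero_iff, or_iff_left (by positivity),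
        Finset.sum_eq_zero_iff_of_nonneg (fun _ _ => sq_nonneg _)] at hz
      have := pow_eq_zero_iff (two_ne_zero) |>.1 (hz y (Finset.mem_univ y))
      linarith
    simp only [hF1, h, signRelEnt]
    norm_num [expec_const]
    positivity
  · have hV : 0 < 1 - a ^ 2 := by nlinarith
    have hpt : ∀ y, signRelEnt (noiseOp n ε F y) a ≤ (noiseOp n ε F y - a) ^ 2 / (1 - a ^ 2) := by
      intro y
      obtain ⟨l, u⟩ := noiseOp_mem_Icc h0 h1 hF y
      have := signRelEnt_le_sq (t := a) (u := noiseOp n ε F y - a)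
        (abs_lt.2 ⟨by linarith, h⟩) (by linarith) (by linarith)
      rwa [add_sub_cancel] at this
    refine (expec_mono hpt).trans ?_
    rw [expec_div, div_le_iff₀ hV]
    refine hu2.trans ?_
    have hp75 : (1 - a) / 2 ≤ 1 / 75 := by nlinarith
    have hW1 : W / 4 ≤ (1 - a) / 2 / 5 := by
      refine abs_le_of_sq_le_sq' (hl.trans ?_) (by linarith) |>.2
      have : 0 < (1 - a) / 2 := by linarith
      generalize (1 - a) / 2 = p at *
      nlinarith [sq_nonneg p]
    have hW2 : W ≤ 1 / 4 * (1 - a ^ 2) := by nlinarith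
    have e1 : 0 ≤ r ^ 4 * W := by positivity
    have e2 := mul_le_mul_of_nonneg_left hW2 (sq_nonneg r)
    have e3 : r ^ 4 * (1 - a ^ 2) ≤ 1 / 5 * r ^ 2 * (1 - a ^ 2) := by
      refine mul_le_mul_of_nonneg_right ?_ hV.le
      nlinarith [sq_nonneg r]
    have e4 : 0 ≤ r ^ 2 * (1 - a ^ 2) := by positivity
    linarith

lemma signInfo_le_of_biased {ε : ℝ} (h0 : 0 ≤ ε) (h1 : ε ≤ 1)
    (hr : (1 - 2 * ε) ^ 2 ≤ 1 / 5) (hF : ∀ x, F x ^ 2 = 1)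
    (ha : 1 - expec n F ^ 2 ≤ 1 / 20) :
    signInfo n ε F ≤ (1 - 2 * ε) ^ 2 / 2 := by
  rcases le_total 0 (expec n F) with h | h
  · exact signInfo_le_of_biased_nonneg h0 h1 hr hF ha h
  · rw [← signInfo_neg]
    refine signInfo_le_of_biased_nonneg h0 h1 hr (by simpa using hF) ?_ ?_
    · rwa [expec_neg, neg_sq]
    · rw [expec_neg]; linarith

lemma quartic_moment_bound {c V r U2 U4 : ℝ} (hc0 : 0 < c) (hc1 : c ≤ 1) (hV : 1 / 20 ≤ V)
    (hr : r ^ 2 ≤ c ^ 2 / 2000) (q2 : U2 ≤ V * (r ^ 2 * (1 - c) + r ^ 4))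
    (q4 : U4 ≤ 9 * r ^ 4 * V ^ 2) :
    (1 / (2 * V) + c / (80 * V ^ 2)) * U2 + (20 / (9 * c * V ^ 2) + 4 / (3 * V ^ 3)) * U4 ≤
      r ^ 2 / 2 := by
  have hV0 : 0 < V := by linarith
  have hVi : 1 / V ≤ 20 := by rw [div_le_iff₀ hV0]; linarith
  have t1 : (1 / (2 * V) + c / (80 * V ^ 2)) * U2 ≤
      (1 / 2 + c / 80 * (1 / V)) * (r ^ 2 * (1 - c) + r ^ 4) := by
    refine (mul_le_mul_of_nonneg_left q2 (by positivity)).trans (le_of_eq ?_)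
    field_simp
  have t2 : (20 / (9 * c * V ^ 2) + 4 / (3 * V ^ 3)) * U4 ≤
      (20 / c + 12 * (1 / V)) * r ^ 4 := by
    refine (mul_le_mul_of_nonneg_left q4 (by positivity)).trans (le_of_eq ?_)
    field_simp; ring
  have hn : 0 ≤ r ^ 2 * (1 - c) + r ^ 4 := by
    have : 0 ≤ 1 - c := by linarith
    positivity
  have t3 : (1 / 2 + c / 80 * (1 / V)) * (r ^ 2 * (1 - c) + r ^ 4) ≤
      (1 / 2 + c / 80 * 20) * (r ^ 2 * (1 - c) + r ^ 4) := by gcongr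
  have t4 : (20 / c + 12 * (1 / V)) * r ^ 4 ≤ (20 / c + 12 * 20) * r ^ 4 := by gcongr
  have hci : 1 ≤ 1 / c := by rw [le_div_iff₀ hc0]; linarith
  have t5 : (20 / c + 12 * 20) * r ^ 4 ≤ 260 * (1 / c) * r ^ 4 := by
    gcongr; rw [div_eq_mul_one_div]; linarith
  have t6 : 1 / c * r ^ 4 ≤ c / 2000 * r ^ 2 := by
    have : 1 / c * r ^ 4 = 1 / c * r ^ 2 * r ^ 2 := by ring
    rw [this]
    refine mul_le_mul_of_nonneg_right ?_ (sq_nonneg r)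
    rw [one_div, inv_mul_le_iff₀ hc0]; linarith
  have t7 : r ^ 4 ≤ c / 2000 * r ^ 2 := by
    have : r ^ 4 ≤ 1 / c * r ^ 4 := le_mul_of_one_le_left (by positivity) hci
    linarith
  have t8 : c * (r ^ 2 * (1 - c) + r ^ 4) ≤ c * (r ^ 2 + c / 2000 * r ^ 2) := by
    gcongr; nlinarith [sq_nonneg r]
  have t9 : c ^ 2 * r ^ 2 ≤ c * r ^ 2 := by
    refine mul_le_mul_of_nonneg_right (by rw [sq]; exact mul_le_of_le_one_left hc0.le hc1) (sq_nonneg r)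
  have t10 : 0 ≤ c * r ^ 2 := by positivity
  linarith

lemma signInfo_le_of_levelOne_le {ε c : ℝ} (h0 : 0 ≤ ε) (h1 : ε ≤ 1) (hc0 : 0 < c) (hc1 : c ≤ 1)
    (hr : (1 - 2 * ε) ^ 2 ≤ c ^ 2 / 2000) (hF : ∀ x, F x ^ 2 = 1)
    (ha : 1 / 20 ≤ 1 - expec n F ^ 2)
    (hW : levelOne n F ≤ (1 - c) * (1 - expec n F ^ 2)) :
    signInfo n ε F ≤ (1 - 2 * ε) ^ 2 / 2 := by
  have hcc : c ^ 2 ≤ 1 := by nlinarith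
  have hu2 := expec_noiseOp_sub_sq_le (show (1 - 2 * ε) ^ 2 ≤ 1 by linarith) F
  have hu4 := expec_noiseOp_sub_pow_four_le (show 3 * (1 - 2 * ε) ^ 2 ≤ 1 by linarith) F
  rw [expec_sq_of_sign hF] at hu2 hu4
  unfold signInfo
  set a := expec n F with ha'
  set W := levelOne n F
  have hW0 : 0 ≤ W := levelOne_nonneg F
  set r := 1 - 2 * ε
  set V := 1 - a ^ 2 with hV
  have hV0 : 0 < V := by linarith
  have ha1 : |a| < 1 := by rw [abs_lt]; constructor <;> nlinarith
  have ha2 : a ^ 2 ≤ 1 := by linarith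
  have hpt : ∀ y, signRelEnt (noiseOp n ε F y) a ≤
      (1 / (2 * V) + c / (80 * V ^ 2)) * (noiseOp n ε F y - a) ^ 2 +
        (20 / (9 * c * V ^ 2) + 4 / (3 * V ^ 3)) * (noiseOp n ε F y - a) ^ 4 := by
    intro y
    obtain ⟨l, u⟩ := noiseOp_mem_Icc h0 h1 hF y
    have := signRelEnt_le_quartic (t := a) (u := noiseOp n ε F y - a) ha1
      (by linarith) (by linarith)
    rw [add_sub_cancel, ← hV] at this
    generalize noiseOp n ε F y - a = w at *
    refine this.trans ?_
    have k1 : a * w ^ 3 ≤ 3 * c / 80 * w ^ 2 + 20 / (3 * c) * w ^ 4 := by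
      have s : 0 ≤ (3 * c / 40 * w - a * w ^ 2) ^ 2 * (20 / (3 * c)) := by positivity
      have s2 : (3 * c / 40 * w - a * w ^ 2) ^ 2 * (20 / (3 * c)) =
          3 * c / 80 * w ^ 2 - a * w ^ 3 + 20 / (3 * c) * w ^ 4 * a ^ 2 := by
        field_simp; ring
      have s3 : 20 / (3 * c) * w ^ 4 * a ^ 2 ≤ 20 / (3 * c) * w ^ 4 :=
        mul_le_of_le_one_right (by positivity) ha2
      linarith
    have k2 : a * w ^ 3 / (3 * V ^ 2) ≤
        (3 * c / 80 * w ^ 2 + 20 / (3 * c) * w ^ 4) / (3 * V ^ 2) := by gcongr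
    have k3 : w ^ 4 * (1 + 3 * a ^ 2) / (3 * V ^ 3) ≤ w ^ 4 * 4 / (3 * V ^ 3) := by
      gcongr; linarith
    refine (add_le_add (add_le_add le_rfl k2) k3).trans (le_of_eq ?_)
    field_simp; ring
  refine (expec_mono hpt).trans ?_
  rw [expec_add, expec_mul_left, expec_mul_left]
  set U2 := expec n (fun x => (noiseOp n ε F x - a) ^ 2)
  set U4 := expec n (fun x => (noiseOp n ε F x - a) ^ 4)
  have q2 : U2 ≤ V * (r ^ 2 * (1 - c) + r ^ 4) := by
    have := mul_le_mul_of_nonneg_left hW (sq_nonneg r)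
    have : 0 ≤ r ^ 4 * W := by positivity
    linarith
  have q4 : U4 ≤ 9 * r ^ 4 * V ^ 2 := by linarith
  exact quartic_moment_bound hc0 hc1 ha hr q2 q4

end SignFunctions

section Dictators

variable {n : ℕ} {F : (Fin n → Bool) → ℝ}

lemma sq_sub_one_sq_le {l f : ℝ} (hf : f ^ 2 = 1) :
    (l ^ 2 - 1) ^ 2 ≤ 512000 * ((l - f) ^ 2 * (10 ^ 10 / 2) + (l + f) ^ 2 / (2 * 10 ^ 10)) +
      (l ^ 6 + 1) / 512000 := by
  have e : l ^ 2 - 1 = (l - f) * (l + f) := by linear_combination hf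
  have h1 : |l ^ 2 - 1| ≤ (l - f) ^ 2 * (10 ^ 10 / 2) + (l + f) ^ 2 / (2 * 10 ^ 10) := by
    rw [e, abs_le]
    constructor <;>
      nlinarith [sq_nonneg (10 ^ 10 * (l - f) - (l + f)), sq_nonneg (10 ^ 10 * (l - f) + (l + f))]
  have h2 : |l ^ 2 - 1| ^ 3 ≤ l ^ 6 + 1 := by
    rcases le_total 1 (l ^ 2) with h | h
    · rw [abs_of_nonneg (by linarith)]
      have := pow_le_pow_left₀ (show 0 ≤ l ^ 2 - 1 by linarith) (show l ^ 2 - 1 ≤ l ^ 2 by linarith) 3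
      nlinarith
    · rw [abs_of_nonpos (by linarith)]
      have := pow_le_one₀ (n := 3) (show 0 ≤ -(l ^ 2 - 1) by linarith) (by nlinarith [sq_nonneg l])
      have : 0 ≤ l ^ 6 := by positivity
      linarith
  have h3 : |l ^ 2 - 1| ^ 2 ≤ 512000 * |l ^ 2 - 1| + |l ^ 2 - 1| ^ 3 / 512000 := by
    have h := abs_nonneg (l ^ 2 - 1)
    generalize |l ^ 2 - 1| = q at *
    nlinarith [mul_nonneg h (sq_nonneg (q - 512000))]
  rw [sq_abs] at h3
  linarith

/-- A sign function whose Fourier weight is concentrated on the first two levels, and which is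
not too biased, is close to a dictator or to its negation. -/
lemma exists_dictator_of_levelOne_ge (hF : ∀ x, F x ^ 2 = 1)
    (ha : 1 / 20 ≤ 1 - expec n F ^ 2)
    (hW : (1 - 1 / 10 ^ 22) * (1 - expec n F ^ 2) ≤ levelOne n F) :
    ∃ i, 1 - 1 / 400 ≤ |expec n (fun x => F x * sgn (x i))| := by
  set a := expec n F with ha'
  set b : Fin n → ℝ := fun i => expec n (fun x => F x * sgn (x i)) with hb
  have hWb : levelOne n F = ∑ i, b i ^ 2 := rfl
  set W := levelOne n F
  have hFl : expec n (fun x => F x * (a + linForm b x)) = a ^ 2 + W := by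
    have e : (fun x => F x * (a + linForm b x)) = fun x => a * F x + F x * linForm b x := by
      funext x; ring
    rw [e, expec_add, expec_mul_left, expec_mul_linForm, ← ha', hWb, sq]
    congr 1
    exact Finset.sum_congr rfl fun i _ => (sq _).symm
  have hl2 : expec n (fun x => (a + linForm b x) ^ 2) = a ^ 2 + W := expec_linForm_sq a b
  have hl4 := expec_linForm_pow_four a b
  have hl6 := expec_linForm_pow_six_le a b
  rw [← hWb] at hl4 hl6
  have hF2 := expec_sq_of_sign hF
  have hsub : expec n (fun x => (a + linForm b x - F x) ^ 2) = 1 - (a ^ 2 + W) := by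
    have e : (fun x => (a + linForm b x - F x) ^ 2) = fun x =>
        ((a + linForm b x) ^ 2 - 2 * (F x * (a + linForm b x))) + F x ^ 2 := by
      funext x; ring
    rw [e, expec_add, expec_sub, expec_mul_left, hl2, hFl, hF2]; ring
  have hadd : expec n (fun x => (a + linForm b x + F x) ^ 2) = 1 + 3 * (a ^ 2 + W) := by
    have e : (fun x => (a + linForm b x + F x) ^ 2) = fun x =>
        ((a + linForm b x) ^ 2 + 2 * (F x * (a + linForm b x))) + F x ^ 2 := by
      funext x; ring
    rw [e, expec_add, expec_add, expec_mul_left, hl2, hFl, hF2]; ring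
  have hle1 : a ^ 2 + W ≤ 1 := by
    have : 0 ≤ expec n (fun x => (a + linForm b x - F x) ^ 2) := expec_nonneg fun _ => sq_nonneg _
    linarith
  have hW0 : 0 ≤ W := levelOne_nonneg F
  have hq : expec n (fun x => ((a + linForm b x) ^ 2 - 1) ^ 2) =
      (1 - (a ^ 2 + W)) ^ 2 + 4 * a ^ 2 * W + 2 * (W ^ 2 - ∑ i, b i ^ 4) := by
    have e : (fun x => ((a + linForm b x) ^ 2 - 1) ^ 2) = fun x =>
        ((a + linForm b x) ^ 4 - 2 * (a + linForm b x) ^ 2) + 1 := by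
      funext x; ring
    rw [e, expec_add, expec_sub, expec_mul_left, expec_const, hl2, hl4]; ring
  have hq' := expec_mono fun x => sq_sub_one_sq_le (l := a + linForm b x) (hF x)
  simp only [hq, expec_add, expec_mul_left, expec_div, expec_const,
    mul_comm _ ((10 : ℝ) ^ 10 / 2), hsub, hadd] at hq'
  have hS : expec n (fun x => (a + linForm b x) ^ 6) ≤ 15 := by
    refine hl6.trans ?_
    have h3 : (a ^ 2 + W) ^ 3 ≤ 1 := pow_le_one₀ (by positivity) hle1
    have p1 : 0 ≤ a ^ 6 := by positivity
    have p2 : 0 ≤ a ^ 4 * W := by positivity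
    linear_combination 15 * h3 + 14 * p1 + 30 * p2
  have hη : 1 - (a ^ 2 + W) ≤ 1 / 10 ^ 22 := by nlinarith [sq_nonneg a]
  have hκ : 4 * a ^ 2 * W + 2 * (W ^ 2 - ∑ i, b i ^ 4) ≤ 1 / 4000 := by
    have := sq_nonneg (1 - (a ^ 2 + W))
    norm_num at hη hq' ⊢
    linarith
  have hWlo : 1 / 21 ≤ W := by norm_num at hW ⊢; linarith
  by_contra! hcon
  have hb4 : ∑ i, b i ^ 4 ≤ (1 - 1 / 400) * W := by
    rw [hWb, Finset.mul_sum]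
    refine Finset.sum_le_sum fun i _ => ?_
    have h1 : b i ^ 2 ≤ 1 - 1 / 400 := by
      have := hcon i
      rw [← sq_abs]
      have h0 := abs_nonneg (b i)
      change |b i| < _ at this
      nlinarith
    have : b i ^ 4 = b i ^ 2 * b i ^ 2 := by ring
    rw [this]
    exact mul_le_mul_of_nonneg_right h1 (sq_nonneg _)
  have hb4' : ∑ i, b i ^ 4 ≤ W ^ 2 := by
    rw [hWb, sq, Finset.sum_mul_sum]
    refine Finset.sum_le_sum fun i _ => ?_
    have : b i ^ 4 = b i ^ 2 * b i ^ 2 := by ring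
    rw [this]
    exact Finset.single_le_sum (f := fun j => b i ^ 2 * b j ^ 2) (fun j _ => by positivity)
      (Finset.mem_univ i)
  have ha2 : a ^ 2 ≤ 1 / 760 := by nlinarith [sq_nonneg a]
  have hW1 : 1 - 1 / 750 ≤ W := by norm_num at hη ⊢; linarith
  nlinarith

lemma signRelEnt_add_le {t m u : ℝ} (ht : |t| ≤ 1 / 9) (hm : |m| < 1) (hl : -1 ≤ t + u)
    (hu : t + u ≤ 1) :
    signRelEnt (t + u) m ≤ u ^ 2 + u ^ 4 + signRelEnt t m + signLogRatio t m * u := by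
  rw [signRelEnt_add_chain (by linarith) hm]
  have hq := signRelEnt_le_quartic (show |t| < 1 by linarith) hl hu
  have ht2 : t ^ 2 ≤ 1 / 81 := by rw [← sq_abs]; nlinarith [abs_nonneg t]
  have k1 : u ^ 2 / (2 * (1 - t ^ 2)) ≤ 3 / 4 * u ^ 2 := by
    rw [div_le_iff₀ (by linarith)]; nlinarith [sq_nonneg u]
  have k2 : t * u ^ 3 / (3 * (1 - t ^ 2) ^ 2) ≤ 1 / 4 * (u ^ 2 + u ^ 4) := by
    have d : 1 / 2 ≤ (1 - t ^ 2) ^ 2 := by nlinarith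
    have k : t * u ^ 3 ≤ 1 / 4 * (u ^ 2 + u ^ 4) := by
      nlinarith [sq_nonneg (u - 2 * t * u ^ 2), mul_nonneg (sq_nonneg (u ^ 2)) (sub_nonneg.2 ht2), sq_nonneg u, sq_nonneg (u ^ 2)]
    rw [div_le_iff₀ (by linarith)]
    have : 0 ≤ u ^ 2 + u ^ 4 := by positivity
    nlinarith
  have k3 : u ^ 4 * (1 + 3 * t ^ 2) / (3 * (1 - t ^ 2) ^ 3) ≤ 3 / 4 * u ^ 4 := by
    have d : (1 - 1 / 81) ^ 3 ≤ (1 - t ^ 2) ^ 3 :=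
      pow_le_pow_left₀ (by norm_num) (by linarith) 3
    norm_num at d
    rw [div_le_iff₀ (by linarith)]
    have : 0 ≤ u ^ 4 := by positivity
    nlinarith
  linarith

lemma signRelEnt_add_sgn_le {m r u : ℝ} (b : Bool) (hm : |m| ≤ 1 / 400) (hr0 : 0 ≤ r)
    (hr1 : r ≤ 1 / 10) (hl : -1 ≤ m + r * sgn b + u) (hu : m + r * sgn b + u ≤ 1) :
    signRelEnt (m + r * sgn b + u) m ≤ u ^ 2 + u ^ 4 +
      (signRelEnt (m + r) m + signRelEnt (m - r) m) / 2 +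
      (signRelEnt (m + r) m - signRelEnt (m - r) m) / 2 * sgn b +
      (signLogRatio (m + r) m + signLogRatio (m - r) m) / 2 * u +
      (signLogRatio (m + r) m - signLogRatio (m - r) m) / 2 * (u * sgn b) := by
  obtain ⟨hm1, hm2⟩ := abs_le.1 hm
  cases b
  · simp only [sgn_false, mul_one] at hl hu ⊢
    have := signRelEnt_add_le (m := m) (abs_le.2 ⟨by linarith, by linarith⟩) (by linarith) hl hu
    linarith
  · simp only [sgn_true, mul_neg, mul_one, ← sub_eq_add_neg] at hl hu ⊢
    have := signRelEnt_add_le (m := m) (abs_le.2 ⟨by linarith, by linarith⟩) (by linarith) hl hu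
    linarith

lemma dictator_moment_bound {m r τ W U2 U4 : ℝ} (hr0 : 0 ≤ r) (hr1 : r ≤ 1 / 10) (hτ0 : 0 ≤ τ)
    (hτ1 : τ ≤ 1 / 800) (hmτ : |m| ≤ 2 * τ) (hWg0 : 0 ≤ W) (hWg : W ≤ τ / 4)
    (hu2 : U2 ≤ r ^ 2 * W + r ^ 4 * (4 * τ - m ^ 2 - W))
    (hu4 : U4 ≤ (3 * r ^ 2 * (4 * τ - m ^ 2)) ^ 2) :
    U2 + U4 + (signRelEnt (m + r) m + signRelEnt (m - r) m) / 2 +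
      (signLogRatio (m + r) m - signLogRatio (m - r) m) / 2 * (-2 * τ * r) ≤
      signRelEnt r 0 := by
  have hmr : |m| + r < 1 := by linarith
  have hr : r ^ 2 ≤ 1 / 100 := by nlinarith
  have hA := signRelEnt_add_sub_le (m := m) (r := r) (by rwa [abs_of_nonneg hr0])
  have hβ := le_signLogRatio_sub hr0 hmr
  have hβ' := mul_le_mul_of_nonneg_left hβ (show 0 ≤ 2 * τ * r by positivity)
  have hmm : m ^ 2 ≤ 4 * τ ^ 2 := by rw [← sq_abs]; nlinarith [abs_nonneg m]
  have hmm' : m ^ 2 ≤ 1 / 4 := by nlinarith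
  have hA' : m ^ 2 * r ^ 2 / ((1 - m ^ 2) * (1 - r ^ 2)) ≤ 8 * τ ^ 2 * r ^ 2 := by
    have hd : 1 / 2 ≤ (1 - m ^ 2) * (1 - r ^ 2) := by nlinarith
    rw [div_le_iff₀ (by linarith)]
    calc m ^ 2 * r ^ 2 ≤ 4 * τ ^ 2 * r ^ 2 := by gcongr
      _ = 8 * τ ^ 2 * r ^ 2 * (1 / 2) := by ring
      _ ≤ _ := by gcongr
  have h2 : U2 ≤ r ^ 2 * (τ / 4) + r ^ 2 * r ^ 2 * (4 * τ) := by
    have e1 := mul_le_mul_of_nonneg_left hWg (sq_nonneg r)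
    have e2 : 0 ≤ r ^ 4 * W := by positivity
    have e3 : 0 ≤ r ^ 4 * m ^ 2 := by positivity
    linarith
  have h4 : U4 ≤ 144 * r ^ 2 * r ^ 2 * τ ^ 2 := by
    refine hu4.trans ?_
    have : (3 * r ^ 2 * (4 * τ - m ^ 2)) ^ 2 ≤ (3 * r ^ 2 * (4 * τ)) ^ 2 := by
      refine pow_le_pow_left₀ (mul_nonneg (by positivity) ?_) (by gcongr; linarith [sq_nonneg m]) 2
      nlinarith
    refine this.trans (le_of_eq (by ring))
  have hR : 0 ≤ r ^ 2 * τ := by positivity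
  have w1 : r ^ 2 * r ^ 2 * τ ≤ 1 / 100 * (r ^ 2 * τ) := by
    rw [mul_assoc]; exact mul_le_mul_of_nonneg_right hr hR
  have w2 : τ ^ 2 * r ^ 2 ≤ 1 / 800 * (r ^ 2 * τ) := by
    rw [show τ ^ 2 * r ^ 2 = τ * (r ^ 2 * τ) by ring]
    exact mul_le_mul_of_nonneg_right hτ1 hR
  have w3 : r ^ 2 * r ^ 2 * τ ^ 2 ≤ 1 / 100 * (1 / 800 * (r ^ 2 * τ)) := by
    rw [mul_assoc, mul_comm (r ^ 2) (τ ^ 2)]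
    exact mul_le_mul hr w2 (by positivity) (by norm_num)
  linarith

lemma signInfo_le_of_dictator_pos {ε : ℝ} (h0 : 0 ≤ ε) (h1 : ε ≤ 1 / 2)
    (hr : (1 - 2 * ε) ^ 2 ≤ 1 / 100) (hF : ∀ x, F x ^ 2 = 1) (i : Fin n)
    (hi : 1 - 1 / 400 ≤ expec n (fun x => F x * sgn (x i))) :
    signInfo n ε F ≤ signRelEnt (1 - 2 * ε) 0 := by
  set g : (Fin n → Bool) → ℝ := fun x => F x - sgn (x i) with hg
  have hTF : ∀ y, noiseOp n ε F y = noiseOp n ε g y + (1 - 2 * ε) * sgn (y i) := by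
    intro y; rw [hg, noiseOp_sub, noiseOp_sgn]; ring
  have hm : expec n F = expec n g := by rw [hg, expec_sub, expec_sgn, sub_zero]
  obtain ⟨τ, hτ⟩ : ∃ τ, expec n (fun x => F x * sgn (x i)) = 1 - 2 * τ :=
    ⟨(1 - expec n (fun x => F x * sgn (x i))) / 2, by ring⟩
  have hτ1 : τ ≤ 1 / 800 := by linarith
  have hg2 : expec n (fun x => g x ^ 2) = 4 * τ := by
    have e : (fun x => g x ^ 2) = fun x => 2 - 2 * (F x * sgn (x i)) := by
      funext x; simp only [hg]; linear_combination hF x + sgn_sq (x i)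
    rw [e, expec_sub, expec_const, expec_mul_left, hτ]; ring
  have hτ0 : 0 ≤ τ := by
    have : 0 ≤ expec n (fun x => g x ^ 2) := expec_nonneg fun _ => sq_nonneg _
    linarith
  have hgv : ∀ x, g x = 0 ∨ g x = 2 ∨ g x = -2 := by
    intro x
    have hc : sgn (x i) = 1 ∨ sgn (x i) = -1 := sq_eq_sq_iff_eq_or_eq_neg.1 (by rw [sgn_sq, one_pow])
    have hf : F x = 1 ∨ F x = -1 := sq_eq_sq_iff_eq_or_eq_neg.1 (by rw [hF, one_pow])
    simp only [hg]
    rcases hc with hc | hc <;> rcases hf with hf | hf <;> norm_num [hc, hf]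
  have hgs : expec n (fun x => g x * sgn (x i)) = -2 * τ := by
    have e : (fun x => g x * sgn (x i)) = fun x => F x * sgn (x i) - 1 := by
      funext x; simp only [hg]; linear_combination -sgn_sq (x i)
    rw [e, expec_sub, expec_const, hτ]; ring
  have hmτ : |expec n g| ≤ 2 * τ := by
    have hu : expec n g ≤ expec n (fun x => 1 / 2 * g x ^ 2) := expec_mono fun x => by
      rcases hgv x with h | h | h <;> norm_num [h]
    have hl : expec n (fun x => -1 / 2 * g x ^ 2) ≤ expec n g := expec_mono fun x => by
      rcases hgv x with h | h | h <;> norm_num [h]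
    rw [expec_mul_left, hg2] at hu hl
    rw [abs_le]; constructor <;> linarith
  have hWg : levelOne n g ≤ τ / 4 := by
    have hl := levelOne_sq_le (fun x => 1 / 2 * g x) fun x => by
      rcases hgv x with h | h | h <;> norm_num [h]
    have e : (fun x => (1 / 2 * g x) ^ 2) = fun x => 1 / 4 * g x ^ 2 := by funext x; ring
    rw [levelOne_mul_left, e, expec_mul_left, hg2] at hl
    refine abs_le_of_sq_le_sq' ?_ (by linarith) |>.2
    nlinarith [mul_le_mul_of_nonneg_left hτ1 (sq_nonneg τ)]
  have hu2 := expec_noiseOp_sub_sq_le (show (1 - 2 * ε) ^ 2 ≤ 1 by linarith) g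
  have hu4 := expec_noiseOp_sub_pow_four_le (show 3 * (1 - 2 * ε) ^ 2 ≤ 1 by linarith) g
  rw [hg2] at hu2 hu4
  have hus : expec n (fun x => (noiseOp n ε g x - expec n g) * sgn (x i)) =
      -2 * τ * (1 - 2 * ε) := by
    simp only [sub_mul]
    rw [expec_sub, expec_mul_left, expec_sgn, expec_noiseOp_mul]
    simp only [noiseOp_sgn]
    have e : (fun x => g x * ((1 - 2 * ε) * sgn (x i))) =
        fun x => (1 - 2 * ε) * (g x * sgn (x i)) := by funext x; ring
    rw [e, expec_mul_left, hgs]; ring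
  have hu1 : expec n (fun x => noiseOp n ε g x - expec n g) = 0 := by
    rw [expec_sub, expec_const, expec_noiseOp, sub_self]
  have hbd : ∀ y, -1 ≤ noiseOp n ε F y ∧ noiseOp n ε F y ≤ 1 :=
    noiseOp_mem_Icc h0 (by linarith) hF
  unfold signInfo
  rw [hm]
  simp only [hTF] at hbd ⊢
  set m := expec n g
  have hr0 : 0 ≤ 1 - 2 * ε := by linarith
  set r := 1 - 2 * ε
  have hr1 : r ≤ 1 / 10 := by nlinarith
  have hm0 : |m| ≤ 1 / 400 := by linarith
  have hpt : ∀ y, signRelEnt (noiseOp n ε g y + r * sgn (y i)) m ≤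
      (noiseOp n ε g y - m) ^ 2 + (noiseOp n ε g y - m) ^ 4 +
        (signRelEnt (m + r) m + signRelEnt (m - r) m) / 2 +
        (signRelEnt (m + r) m - signRelEnt (m - r) m) / 2 * sgn (y i) +
        (signLogRatio (m + r) m + signLogRatio (m - r) m) / 2 * (noiseOp n ε g y - m) +
        (signLogRatio (m + r) m - signLogRatio (m - r) m) / 2 *
          ((noiseOp n ε g y - m) * sgn (y i)) := by
    intro y
    have hb := hbd y
    have e : noiseOp n ε g y + r * sgn (y i) = m + r * sgn (y i) + (noiseOp n ε g y - m) := by ring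
    rw [e] at hb ⊢
    exact signRelEnt_add_sgn_le (y i) hm0 hr0 hr1 hb.1 hb.2
  refine (expec_mono hpt).trans ?_
  simp only [expec_add, expec_mul_left, expec_const, expec_sgn, hus, hu1, mul_zero, add_zero]
  set U2 := expec n (fun x => (noiseOp n ε g x - m) ^ 2)
  set U4 := expec n (fun x => (noiseOp n ε g x - m) ^ 4)
  exact dictator_moment_bound hr0 hr1 hτ0 hτ1 hmτ (levelOne_nonneg g) hWg hu2 hu4

lemma signInfo_le_of_dictator {ε : ℝ} (h0 : 0 ≤ ε) (h1 : ε ≤ 1 / 2)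
    (hr : (1 - 2 * ε) ^ 2 ≤ 1 / 100) (hF : ∀ x, F x ^ 2 = 1) (i : Fin n)
    (hi : 1 - 1 / 400 ≤ |expec n (fun x => F x * sgn (x i))|) :
    signInfo n ε F ≤ signRelEnt (1 - 2 * ε) 0 := by
  rcases le_abs.1 hi with h | h
  · exact signInfo_le_of_dictator_pos h0 h1 hr hF i h
  · rw [← signInfo_neg]
    refine signInfo_le_of_dictator_pos h0 h1 hr (by simpa using hF) i ?_
    simpa only [neg_mul, expec_neg] using h

lemma signInfo_le {ε : ℝ} (h0 : 0 ≤ ε) (h1 : ε ≤ 1 / 2)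
    (hr : (1 - 2 * ε) ^ 2 ≤ (1 / 10 ^ 22) ^ 2 / 2000) (hF : ∀ x, F x ^ 2 = 1) :
    signInfo n ε F ≤ signRelEnt (1 - 2 * ε) 0 := by
  have hr' : (1 - 2 * ε) ^ 2 ≤ 1 / 100 := hr.trans (by norm_num)
  have hq := sq_div_two_le_signRelEnt (show 0 ≤ 1 - 2 * ε by linarith) (by nlinarith)
  rcases le_total (1 - expec n F ^ 2) (1 / 20) with ha | ha
  · exact (signInfo_le_of_biased h0 (by linarith) (by linarith) hF ha).trans hq
  rcases le_total (levelOne n F) ((1 - 1 / 10 ^ 22) * (1 - expec n F ^ 2)) with hW | hW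
  · exact (signInfo_le_of_levelOne_le h0 (by linarith) (by norm_num) (by norm_num) hr hF ha
      hW).trans hq
  · obtain ⟨i, hi⟩ := exists_dictator_of_levelOne_ge hF ha hW
    exact signInfo_le_of_dictator h0 h1 hr' hF i hi

end Dictators

section MutualInformation

variable {n : ℕ} {f : (Fin n → Bool) → ℝ}

lemma jointP_true (ε : ℝ) (hf : ∀ x, f x = 0 ∨ f x = 1) (y : Fin n → Bool) :
    jointP n ε f true y = noiseOp n ε f y / 2 ^ n := by
  unfold jointP noiseOp
  congr 1
  refine Finset.sum_congr rfl fun x _ => ?_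
  rw [noiseK_comm]
  rcases hf x with h | h <;> simp [h]

lemma jointP_false (ε : ℝ) (hf : ∀ x, f x = 0 ∨ f x = 1) (y : Fin n → Bool) :
    jointP n ε f false y = (1 - noiseOp n ε f y) / 2 ^ n := by
  rw [← noiseOp_const (n := n) ε 1 y, ← noiseOp_sub]
  unfold jointP noiseOp
  congr 1
  refine Finset.sum_congr rfl fun x _ => ?_
  rw [noiseK_comm]
  rcases hf x with h | h <;> simp [h]

lemma margB_true (hf : ∀ x, f x = 0 ∨ f x = 1) : margB n f true = expec n f := by
  unfold margB expec
  congr 1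
  refine Finset.sum_congr rfl fun x _ => ?_
  rcases hf x with h | h <;> simp [h]

lemma margB_false (hf : ∀ x, f x = 0 ∨ f x = 1) : margB n f false = 1 - expec n f := by
  rw [← expec_const (n := n) 1, ← expec_sub]
  unfold margB expec
  congr 1
  refine Finset.sum_congr rfl fun x _ => ?_
  rcases hf x with h | h <;> simp [h]

lemma margY_eq (ε : ℝ) (hf : ∀ x, f x = 0 ∨ f x = 1) (y : Fin n → Bool) :
    margY n ε f y = 1 / 2 ^ n := by
  rw [margY, Fintype.sum_bool, jointP_true ε hf, jointP_false ε hf]; ring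

lemma mutInfo_eq_signInfo (ε : ℝ) (hf : ∀ x, f x = 0 ∨ f x = 1) :
    mutInfo n ε f = signInfo n ε (fun x => 2 * f x - 1) / Real.log 2 := by
  unfold mutInfo signInfo
  rw [← expec_div, expec, Finset.sum_div]
  refine Finset.sum_congr rfl fun y _ => ?_
  rw [Fintype.sum_bool, jointP_true ε hf, jointP_false ε hf, margB_true hf, margB_false hf,
    margY_eq ε hf, noiseOp_sub, noiseOp_mul_left, noiseOp_const, expec_sub, expec_mul_left,
    expec_const]
  simp only [signRelEnt, Real.logb]
  have hN : (2 : ℝ) ^ n ≠ 0 := by positivity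
  have e : ∀ a b : ℝ, a / 2 ^ n / (b * (1 / 2 ^ n)) = 2 * a / (2 * b) := fun a b => by
    rw [mul_one_div, div_div_div_cancel_right₀ hN, mul_div_mul_left _ _ two_ne_zero]
  rw [e, e]
  ring_nf

lemma one_sub_binEnt_eq {ε : ℝ} (h0 : 0 < ε) (h1 : ε < 1) :
    1 - binEnt ε = signRelEnt (1 - 2 * ε) 0 / Real.log 2 := by
  have hl : Real.log 2 ≠ 0 := (Real.log_pos one_lt_two).ne'
  have e1 : 1 + (1 - 2 * ε) = 2 * (1 - ε) := by ring
  have e2 : 1 - (1 - 2 * ε) = 2 * ε := by ring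
  rw [signRelEnt, add_zero, sub_zero, div_one, div_one, e1, e2,
    Real.log_mul two_ne_zero (by linarith), Real.log_mul two_ne_zero h0.ne']
  simp only [binEnt, Real.logb]
  field_simp
  ring

end MutualInformation

theorem stmt_14 :
    ∃ δ : ℝ, 0 < δ ∧
      ∀ (n : ℕ) (ε : ℝ), 0 ≤ ε → ε ≤ 1/2 → (1 - 2 * ε) ^ 2 ≤ δ →
        ∀ f : (Fin n → Bool) → ℝ, (∀ x, f x = 0 ∨ f x = 1) →
          mutInfo n ε f ≤ 1 - binEnt ε := by
  refine ⟨(1 / 10 ^ 22) ^ 2 / 2000, by norm_num, fun n ε h0 h1 hr f hf => ?_⟩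
  have hε : 0 < ε := by
    refine h0.lt_of_ne fun h => ?_
    rw [← h] at hr
    norm_num at hr
  rw [mutInfo_eq_signInfo ε hf, one_sub_binEnt_eq hε (by linarith)]
  refine div_le_div_of_nonneg_right (signInfo_le h0 h1 hr fun x => ?_)
    (Real.log_pos one_lt_two).le
  rcases hf x with h | h <;> norm_num [h]
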